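/- Let u ∈ L²(ℝ³;ℂ) with ‖u‖_{L²} = 1 and α ∈ L²(ℝ³;ℂ). Define φ̃_α(x) = 2 Im ∫_{ℝ³} B₀(k) e^{ik·x} α(k) dk, τ_{u,α}(x) = φ̃_α(x) − (1/2)∫_{ℝ³} φ̃_α(y)|u(y)|² dy, ŵ(k) = ∫_{ℝ³} e^{−ik·y}|u(y)|² dy, and for θ ∈ ℝ set u^θ(x) = e^{−iθτ_{u,α}(x)} u(x) and α^θ(k) = α(k) + θ·(2π)^{−3/2}·B₀(k)·ŵ(k). Then: (i) |u^θ(x)| = |u(x)| for all θ and x, so ∫ e^{−ik·y}|u^θ(y)|² dy = ŵ(k); (ii) for every θ ∈ ℝ and x ∈ ℝ³, the integral ∫_{ℝ³} B₀(k)² e^{ik·x} ŵ(k) dk is real, hence φ̃_{α^θ} = φ̃_α and τ_{u^θ,α^θ} = τ_{u,α}; (iii) for every x and k the maps θ ↦ u^θ(x) and θ ↦ α^θ(k) are differentiable with i·(d/dθ)u^θ(x) = τ_{u^θ,α^θ}(x)·u^θ(x) and (d/dθ)α^θ(k) = (2π)^{−3/2} B₀(k) ∫ e^{−ik·y}|u^θ(y)|²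 dy. Hence (u^θ, α^θ) solves the mean-field dressing equations with initial datum (u,α). -/

import Mathlib

/-!
Along the flow `u` only acquires a phase, so `|u^θ|²`, and with it `ŵ`, is constant in `θ`. What has
to be checked is that moving `α` does not move `φ̃_α`. Since `|u|²` is real, `ŵ(-k)` is the complex
conjugate of `ŵ(k)`; multiplying by the real even function `B₀` and by plane waves preserves this
symmetry, and the integral of a function with this symmetry is real. Hence `φ̃` vanishes on the
increment `θ (2π)^{-3/2} B₀ ŵ`, and both equations reduce to scalar ODEs with constant coefficients.
-/

open MeasureTheory
open scoped ENNReal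

noncomputable section

/-- The dispersion relation `ω(k) = √(1+|k|²)` of the massive scalar field. -/
def ω (k : EuclideanSpace ℝ (Fin 3)) : ℝ := Real.sqrt (1 + ‖k‖ ^ 2)

/-- The Gross dressing form factor `B₀(k) = 1/(√(ω(k))·(|k|²+ω(k)))`. -/
def B0 (k : EuclideanSpace ℝ (Fin 3)) : ℝ := 1 / (Real.sqrt (ω k) * (‖k‖ ^ 2 + ω k))

/-- `φ̃_α(x) = 2 Im ∫ B₀(k) e^{ik·x} α(k) dk`. -/
def phitilde (α : EuclideanSpace ℝ (Fin 3) → ℂ) (x : EuclideanSpace ℝ (Fin 3)) : ℝ :=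
  2 * (∫ k, ((B0 k : ℝ) : ℂ) * Complex.exp (Complex.I * ((inner ℝ k x : ℝ) : ℂ)) * α k).im

/-- `τ_{u,α}(x) = φ̃_α(x) − ½⟨u, φ̃_α u⟩`. -/
def tau (u α : EuclideanSpace ℝ (Fin 3) → ℂ) (x : EuclideanSpace ℝ (Fin 3)) : ℝ :=
  phitilde α x - (1 / 2) * ∫ y, phitilde α y * ‖u y‖ ^ 2

/-- `ŵ(k) = ∫ e^{−ik·y}|u(y)|² dy`. -/
def what (u : EuclideanSpace ℝ (Fin 3) → ℂ) (k : EuclideanSpace ℝ (Fin 3)) : ℂ :=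
  ∫ y, Complex.exp (-(Complex.I * ((inner ℝ k y : ℝ) : ℂ))) * ((‖u y‖ ^ 2 : ℝ) : ℂ)

/-- The particle component of the mean-field dressing flow,
`u^θ(x) = e^{−iθτ_{u,α}(x)} u(x)`. -/
def uθ (u α : EuclideanSpace ℝ (Fin 3) → ℂ) (θ : ℝ) (x : EuclideanSpace ℝ (Fin 3)) : ℂ :=
  Complex.exp (-(Complex.I * (θ : ℂ) * ((tau u α x : ℝ) : ℂ))) * u x

/-- The field component of the mean-field dressing flow,
`α^θ(k) = α(k) + θ·(2π)^{−3/2}·B₀(k)·ŵ(k)`. -/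
def αθ (u α : EuclideanSpace ℝ (Fin 3) → ℂ) (θ : ℝ) (k : EuclideanSpace ℝ (Fin 3)) : ℂ :=
  α k + (θ : ℂ) * (((2 * Real.pi) ^ (-(3 : ℝ) / 2) : ℝ) : ℂ) * ((B0 k : ℝ) : ℂ) * what u k

section ReflectionSymmetry

theorem im_integral_eq_zero_of_neg_eq_conj {G : Type*} [AddGroup G] [MeasurableSpace G]
    [MeasurableNeg G] {μ : Measure G} [μ.IsNegInvariant] {f : G → ℂ}
    (hf : ∀ k, f (-k) = starRingEnd ℂ (f k)) : (∫ k, f k ∂μ).im = 0 := by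
  rw [← Complex.conj_eq_iff_im, ← integral_conj]
  simp_rw [← hf]
  exact integral_neg_eq_self f μ

variable {V : Type*} [NormedAddCommGroup V] [InnerProductSpace ℝ V]

theorem norm_cexp_I_mul_inner (k x : V) :
    ‖Complex.exp (Complex.I * ((inner ℝ k x : ℝ) : ℂ))‖ = 1 := by
  rw [mul_comm, Complex.norm_exp_ofReal_mul_I]

variable [MeasurableSpace V] {μ : Measure V}

theorem im_integral_mul_cexp_inner_mul_eq_zero [MeasurableNeg V] [μ.IsNegInvariant]
    {m : V → ℝ} {β : V → ℂ}
    (hm : ∀ k, m (-k) = m k) (hβ : ∀ k, β (-k) = starRingEnd ℂ (β k)) (x : V) :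
    (∫ k, (m k : ℂ) * Complex.exp (Complex.I * ((inner ℝ k x : ℝ) : ℂ)) * β k ∂μ).im = 0 := by
  refine im_integral_eq_zero_of_neg_eq_conj fun k => ?_
  simp only [hm, hβ, inner_neg_left, map_mul, ← Complex.exp_conj, Complex.conj_I,
    Complex.conj_ofReal, Complex.ofReal_neg, mul_neg, neg_mul]

theorem integrable_mul_cexp_inner_mul [OpensMeasurableSpace V] {f g : V → ℂ}
    (hfg : Integrable (fun k => f k * g k) μ) (x : V) :
    Integrable
      (fun k => f k * Complex.exp (Complex.I * ((inner ℝ k x : ℝ) : ℂ)) * g k) μ := by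
  have h_wave : Continuous fun k : V => Complex.exp (Complex.I * ((inner ℝ k x : ℝ) : ℂ)) := by
    fun_prop
  refine (hfg.bdd_mul h_wave.aestronglyMeasurable
    (.of_forall fun k => (norm_cexp_I_mul_inner k x).le)).congr (.of_forall fun k => ?_)
  ring

end ReflectionSymmetry

section FormFactor

theorem one_le_ω (k : EuclideanSpace ℝ (Fin 3)) : 1 ≤ ω k :=
  Real.one_le_sqrt.2 (le_add_of_nonneg_right (sq_nonneg _))

theorem B0_neg (k : EuclideanSpace ℝ (Fin 3)) : B0 (-k) = B0 k := by
  simp only [B0, ω, norm_neg]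

theorem B0_nonneg (k : EuclideanSpace ℝ (Fin 3)) : 0 ≤ B0 k := by
  have hω := one_le_ω k
  unfold B0
  positivity

theorem B0_le_inv_one_add_norm_sq (k : EuclideanSpace ℝ (Fin 3)) :
    B0 k ≤ (1 + ‖k‖ ^ 2)⁻¹ := by
  have hω := one_le_ω k
  rw [B0, one_div]
  gcongr
  calc 1 + ‖k‖ ^ 2 ≤ ‖k‖ ^ 2 + ω k := by linarith
    _ ≤ √(ω k) * (‖k‖ ^ 2 + ω k) :=
      le_mul_of_one_le_left (by positivity) (Real.one_le_sqrt.2 hω)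

theorem continuous_B0 : Continuous B0 := by
  have h_cont : Continuous ω := by unfold ω; fun_prop
  refine continuous_const.div (by fun_prop) fun k => ?_
  have hω := one_le_ω k
  positivity

theorem memLp_two_B0 : MemLp B0 2 := by
  rw [memLp_two_iff_integrable_sq continuous_B0.aestronglyMeasurable]
  have h_decay : Integrable fun k : EuclideanSpace ℝ (Fin 3) => (1 + ‖k‖ ^ 2) ^ (-(4 : ℝ) / 2) :=
    integrable_rpow_neg_one_add_norm_sq (by norm_num [finrank_euclideanSpace_fin])
  refine h_decay.mono' (continuous_B0.pow 2).aestronglyMeasurable (.of_forall fun k => ?_)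
  calc ‖B0 k ^ 2‖ = B0 k ^ 2 := Real.norm_of_nonneg (sq_nonneg _)
    _ ≤ ((1 + ‖k‖ ^ 2)⁻¹) ^ 2 := pow_le_pow_left₀ (B0_nonneg k) (B0_le_inv_one_add_norm_sq k) 2
    _ = (1 + ‖k‖ ^ 2) ^ (-(4 : ℝ) / 2) := by
      rw [show -(4 : ℝ) / 2 = -(2 : ℕ) by norm_num, Real.rpow_neg (by positivity),
        Real.rpow_natCast, inv_pow]

theorem integrable_B0_mul {α : EuclideanSpace ℝ (Fin 3) → ℂ} (hα : MemLp α 2 volume) :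
    Integrable fun k => (B0 k : ℂ) * α k :=
  memLp_two_B0.ofReal.integrable_mul hα

end FormFactor

section DensityTransform

variable (u : EuclideanSpace ℝ (Fin 3) → ℂ)

theorem what_eq_fourierIntegral :
    what u = VectorFourier.fourierIntegral Real.probChar volume
      (innerₗ (EuclideanSpace ℝ (Fin 3))) fun y => ((‖u y‖ ^ 2 : ℝ) : ℂ) := by
  ext k
  simp only [what, VectorFourier.fourierIntegral_probChar, innerₗ_apply_apply, smul_eq_mul,
    real_inner_comm, mul_comm Complex.I, neg_mul]

theorem what_neg (k : EuclideanSpace ℝ (Fin 3)) : what u (-k) = starRingEnd ℂ (what u k) := by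
  simp only [what, ← integral_conj, map_mul, ← Complex.exp_conj, map_neg, Complex.conj_I,
    Complex.conj_ofReal, inner_neg_left, Complex.ofReal_neg, mul_neg, neg_mul]

theorem norm_what_le (k : EuclideanSpace ℝ (Fin 3)) : ‖what u k‖ ≤ ∫ y, ‖u y‖ ^ 2 := by
  rw [what_eq_fourierIntegral]
  refine (VectorFourier.norm_fourierIntegral_le_integral_norm ..).trans_eq ?_
  simp only [Complex.norm_real, norm_pow, norm_norm]

variable {u}

theorem continuous_what (hu : MemLp u 2 volume) : Continuous (what u) := by
  rw [what_eq_fourierIntegral]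
  exact VectorFourier.fourierIntegral_continuous Real.continuous_probChar continuous_inner
    (hu.integrable_norm_pow two_ne_zero).ofReal

theorem memLp_two_B0_mul_what (hu : MemLp u 2 volume) :
    MemLp (fun k => (B0 k : ℂ) * what u k) 2 volume := by
  have h_meas : Continuous fun k => (B0 k : ℂ) * what u k :=
    (Complex.continuous_ofReal.comp continuous_B0).mul (continuous_what hu)
  refine memLp_two_B0.of_le_mul (c := ∫ y, ‖u y‖ ^ 2) h_meas.aestronglyMeasurable
    (.of_forall fun k => ?_)
  rw [norm_mul, Complex.norm_real, mul_comm]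
  gcongr
  exact norm_what_le u k

end DensityTransform

section FieldPotential

variable {α β : EuclideanSpace ℝ (Fin 3) → ℂ}

theorem phitilde_add (hα : Integrable fun k => (B0 k : ℂ) * α k)
    (hβ : Integrable fun k => (B0 k : ℂ) * β k) (x : EuclideanSpace ℝ (Fin 3)) :
    phitilde (α + β) x = phitilde α x + phitilde β x := by
  simp only [phitilde, Pi.add_apply, mul_add]
  rw [integral_add (integrable_mul_cexp_inner_mul hα x) (integrable_mul_cexp_inner_mul hβ x),
    Complex.add_im, mul_add]

theorem phitilde_eq_zero_of_neg_eq_conj (hβ : ∀ k, β (-k) = starRingEnd ℂ (β k))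
    (x : EuclideanSpace ℝ (Fin 3)) : phitilde β x = 0 := by
  rw [phitilde, im_integral_mul_cexp_inner_mul_eq_zero B0_neg hβ, mul_zero]

end FieldPotential

section DressingFlow

variable (u α : EuclideanSpace ℝ (Fin 3) → ℂ) (θ : ℝ)

theorem norm_uθ (x : EuclideanSpace ℝ (Fin 3)) : ‖uθ u α θ x‖ = ‖u x‖ := by
  simp [uθ, Complex.norm_exp]

theorem what_uθ (k : EuclideanSpace ℝ (Fin 3)) : what (uθ u α θ) k = what u k := by
  simp only [what, norm_uθ]

theorem im_integral_B0_sq_mul_cexp_inner_mul_what (x : EuclideanSpace ℝ (Fin 3)) :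
    (∫ k, ((B0 k ^ 2 : ℝ) : ℂ) *
      Complex.exp (Complex.I * ((inner ℝ k x : ℝ) : ℂ)) * what u k).im = 0 :=
  im_integral_mul_cexp_inner_mul_eq_zero (m := fun k => B0 k ^ 2)
    (fun k => congrArg (· ^ 2) (B0_neg k)) (what_neg u) x

theorem αθ_eq_add :
    αθ u α θ = α + fun k =>
      ((θ * (2 * Real.pi) ^ (-(3 : ℝ) / 2) : ℝ) : ℂ) * ((B0 k : ℂ) * what u k) := by
  ext k
  simp only [αθ, Pi.add_apply, Complex.ofReal_mul, mul_assoc]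

theorem hasDerivAt_uθ (x : EuclideanSpace ℝ (Fin 3)) :
    HasDerivAt (fun ϑ : ℝ => uθ u α ϑ x) (-Complex.I * (tau u α x : ℂ) * uθ u α θ x) θ := by
  have h_phase : HasDerivAt (fun ϑ : ℝ => -(Complex.I * (ϑ : ℂ) * (tau u α x : ℂ)))
      (-(Complex.I * 1 * (tau u α x : ℂ))) θ :=
    (((hasDerivAt_id θ).ofReal_comp.const_mul Complex.I).mul_const _).neg
  refine (h_phase.cexp.mul_const (u x)).congr_deriv ?_
  rw [uθ]
  ring

theorem hasDerivAt_αθ (k : EuclideanSpace ℝ (Fin 3)) :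
    HasDerivAt (fun ϑ : ℝ => αθ u α ϑ k)
      ((((2 * Real.pi) ^ (-(3 : ℝ) / 2) * B0 k : ℝ) : ℂ) * what u k) θ := by
  have h_id : HasDerivAt (fun ϑ : ℝ => (ϑ : ℂ)) 1 θ := (hasDerivAt_id θ).ofReal_comp
  refine ((((h_id.mul_const _).mul_const _).mul_const _).const_add (α k)).congr_deriv ?_
  rw [one_mul, Complex.ofReal_mul]

variable {u α}

theorem phitilde_αθ (hu : MemLp u 2 volume) (hα : Integrable fun k => (B0 k : ℂ) * α k)
    (x : EuclideanSpace ℝ (Fin 3)) : phitilde (αθ u α θ) x = phitilde α x := by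
  rw [αθ_eq_add, phitilde_add hα (integrable_B0_mul ((memLp_two_B0_mul_what hu).const_mul _)),
    add_eq_left]
  refine phitilde_eq_zero_of_neg_eq_conj (fun k => ?_) x
  simp only [B0_neg, what_neg, map_mul, Complex.conj_ofReal]

theorem tau_uθ_αθ (hu : MemLp u 2 volume) (hα : Integrable fun k => (B0 k : ℂ) * α k)
    (x : EuclideanSpace ℝ (Fin 3)) : tau (uθ u α θ) (αθ u α θ) x = tau u α x := by
  simp only [tau, norm_uθ, phitilde_αθ θ hu hα]

end DressingFlow

theorem dressing_flow_explicit_general (u α : EuclideanSpace ℝ (Fin 3) → ℂ)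
    (hu : MemLp u 2 volume)
    (hα : Integrable fun k => (B0 k : ℂ) * α k) :
    ((∀ θ x, ‖uθ u α θ x‖ = ‖u x‖) ∧
      ∀ θ k, what (uθ u α θ) k = what u k) ∧
    ((∀ x : EuclideanSpace ℝ (Fin 3),
        (∫ k, ((B0 k ^ 2 : ℝ) : ℂ) *
          Complex.exp (Complex.I * ((inner ℝ k x : ℝ) : ℂ)) * what u k).im = 0) ∧
      (∀ θ x, phitilde (αθ u α θ) x = phitilde α x) ∧
      ∀ θ x, tau (uθ u α θ) (αθ u α θ) x = tau u α x) ∧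
    ((∀ (θ : ℝ) (x : EuclideanSpace ℝ (Fin 3)),
        HasDerivAt (fun ϑ : ℝ => uθ u α ϑ x)
          (-Complex.I * ((tau (uθ u α θ) (αθ u α θ) x : ℝ) : ℂ) * uθ u α θ x) θ) ∧
      ∀ (θ : ℝ) (k : EuclideanSpace ℝ (Fin 3)),
        HasDerivAt (fun ϑ : ℝ => αθ u α ϑ k)
          ((((2 * Real.pi) ^ (-(3 : ℝ) / 2) * B0 k : ℝ) : ℂ) * what (uθ u α θ) k) θ) := by
  refine ⟨⟨norm_uθ u α, what_uθ u α⟩,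
    ⟨im_integral_B0_sq_mul_cexp_inner_mul_what u, fun θ => phitilde_αθ θ hu hα,
      fun θ => tau_uθ_αθ θ hu hα⟩, fun θ x => ?_, fun θ k => ?_⟩
  · rw [tau_uθ_αθ θ hu hα]
    exact hasDerivAt_uθ u α θ x
  · rw [what_uθ]
    exact hasDerivAt_αθ u α θ k

/-- `(u^θ, α^θ)` solves the mean-field dressing equations with initial datum `(u,α)`:
(i) `|u^θ| = |u|` and `ŵ` is unchanged along the flow;
(ii) `∫ B₀(k)² e^{ik·x} ŵ(k) dk` is real, hence `φ̃_{α^θ} = φ̃_α` and `τ_{u^θ,α^θ} = τ_{u,α}`;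
(iii) `i ∂_θ u^θ = τ_{u^θ,α^θ} u^θ` and `∂_θ α^θ(k) = (2π)^{−3/2} B₀(k) ∫ e^{−ik·y}|u^θ(y)|² dy`. -/
theorem dressing_flow_explicit (u α : EuclideanSpace ℝ (Fin 3) → ℂ)
    (hu : MemLp u 2 volume) (hu1 : (∫ x, ‖u x‖ ^ 2) = 1)
    (hα : MemLp α 2 volume) :
    -- (i)
    ((∀ θ x, ‖uθ u α θ x‖ = ‖u x‖) ∧
      ∀ θ k, what (uθ u α θ) k = what u k) ∧
    -- (ii)
    ((∀ x : EuclideanSpace ℝ (Fin 3),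
        (∫ k, ((B0 k ^ 2 : ℝ) : ℂ) *
          Complex.exp (Complex.I * ((inner ℝ k x : ℝ) : ℂ)) * what u k).im = 0) ∧
      (∀ θ x, phitilde (αθ u α θ) x = phitilde α x) ∧
      ∀ θ x, tau (uθ u α θ) (αθ u α θ) x = tau u α x) ∧
    -- (iii)
    ((∀ (θ : ℝ) (x : EuclideanSpace ℝ (Fin 3)),
        HasDerivAt (fun ϑ : ℝ => uθ u α ϑ x)
          (-Complex.I * ((tau (uθ u α θ) (αθ u α θ) x : ℝ) : ℂ) * uθ u α θ x) θ) ∧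
      ∀ (θ : ℝ) (k : EuclideanSpace ℝ (Fin 3)),
        HasDerivAt (fun ϑ : ℝ => αθ u α ϑ k)
          ((((2 * Real.pi) ^ (-(3 : ℝ) / 2) * B0 k : ℝ) : ℂ) * what (uθ u α θ) k) θ) :=
  dressing_flow_explicit_general u α hu (integrable_B0_mul hα)

end
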